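/- Let g ∈ C₀(ℝ) (continuous, vanishing at infinity), g not identically zero. If Σ_{k=1}^m c_k g(x + t_k) = 0 for all x ∈ ℝ with t₁,…,t_m distinct reals, then c₁ = ⋯ = c_m = 0. -/

import Mathlib

open Filter
open Complex Set MeasureTheory
open scoped Topology

theorem eq_zero_of_norm_mul_abs_im_le {F : ℂ → ℂ} (hF : Differentiable ℂ F) {C : ℝ}
    (hC : ∀ z, ‖F z‖ * |z.im| ≤ C) : F = 0 := by
  funext z
  by_contra hz
  have ha : 0 < ‖F z‖ := norm_pos_iff.2 hz
  have hC0 : 0 ≤ C := (by positivity : 0 ≤ ‖F z‖ * |z.im|).trans (hC z)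
  set R : ℝ := ‖z‖ + 1 + 2 * C / ‖F z‖ with hR
  have hzR : ‖z‖ + 1 ≤ R := by
    have : 0 ≤ 2 * C / ‖F z‖ := by positivity
    linarith
  have hR0 : 0 < R := by linarith [norm_nonneg z]
  have key : ‖(z ^ 2 - (R : ℂ) ^ 2) * F z‖ ≤ 2 * R * C := by
    refine norm_le_of_forall_mem_frontier_norm_le (U := Metric.ball 0 R) Metric.isBounded_ball
      (f := fun w => (w ^ 2 - (R : ℂ) ^ 2) * F w) (Differentiable.diffContOnCl (by fun_prop))
      (fun w hw => ?_) (subset_closure (by simpa using by linarith))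
    rw [frontier_ball _ hR0.ne', mem_sphere_zero_iff_norm] at hw
    have h : w ^ 2 - (R : ℂ) ^ 2 = w * (2 * w.im * I) := by
      have h₁ : (R : ℂ) ^ 2 = w * (starRingEnd ℂ) w := by rw [mul_conj', hw]
      have h₂ := sub_conj w
      push_cast at h₂
      rw [h₁, ← h₂]
      ring
    rw [h]
    simp only [norm_mul, hw, norm_real, norm_I, mul_one, Real.norm_eq_abs, RCLike.norm_ofNat]
    nlinarith [mul_le_mul_of_nonneg_left (hC w) hR0.le]
  have h2 : R ^ 2 - ‖z‖ ^ 2 ≤ ‖z ^ 2 - (R : ℂ) ^ 2‖ := by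
    have := norm_sub_norm_le ((R : ℂ) ^ 2) (z ^ 2)
    rw [norm_sub_rev] at this
    simpa using this
  rw [norm_mul] at key
  have h3 := (mul_le_mul_of_nonneg_right h2 ha.le).trans key
  have h4 : ‖F z‖ * R - 2 * C = ‖F z‖ * (‖z‖ + 1) := by rw [hR]; field_simp; ring
  have h5 : R * (‖F z‖ * R - 2 * C) ≤ ‖F z‖ * ‖z‖ ^ 2 := by linarith
  rw [h4] at h5
  have h6 : (‖z‖ + 1) * (‖F z‖ * (‖z‖ + 1)) ≤ R * (‖F z‖ * (‖z‖ + 1)) := by gcongr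
  nlinarith [norm_nonneg z]

theorem meromorphicOrderAt_nonneg_of_norm_le {f : ℂ → ℂ} {z : ℂ} (hf : MeromorphicAt f z)
    (h : ∀ ε > 0, ∃ A : ℝ, ∀ᶠ w in 𝓝[≠] z, w.im ≠ 0 → ‖f w‖ ≤ A + ε / |w.im|) :
    0 ≤ meromorphicOrderAt f z := by
  by_contra! hneg
  obtain ⟨s, hs, hsim⟩ : ∃ s : ℝ, |s| = 1 ∧ ∀ y : ℝ, 0 < y → y ≤ |z.im + s * y| := by
    rcases le_total 0 z.im with h0 | h0
    · exact ⟨1, by simp, fun y hy => by rw [le_abs]; left; linarith⟩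
    · exact ⟨-1, by simp, fun y hy => by rw [le_abs]; right; linarith⟩
  have hs0 : s ≠ 0 := by rintro rfl; simp at hs
  let r : ℝ → ℂ := fun y => z + (s * y : ℝ) * I
  have hrim (y : ℝ) : (r y).im = z.im + s * y := by simp [r]
  have hrn (y : ℝ) : ‖r y - z‖ = |y| := by simp [r, hs]
  have hr : Tendsto r (𝓝[>] 0) (𝓝[≠] z) := by
    refine tendsto_nhdsWithin_iff.2 ⟨?_, ?_⟩
    · have : ContinuousAt r 0 := by fun_prop
      have h0 : r 0 = z := by simp [r]
      have := this.tendsto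
      rw [h0] at this
      exact this.mono_left nhdsWithin_le_nhds
    · filter_upwards [self_mem_nhdsWithin] with y hy h0
      have : ‖r y - z‖ = 0 := by rw [show r y = z from h0]; simp
      rw [hrn] at this
      exact (ne_of_gt hy) (abs_eq_zero.1 this)
  let f₂ : ℂ → ℂ := (fun w => w - z) * f
  have hm : MeromorphicAt (fun w : ℂ => w - z) z := by fun_prop
  have hf₂ : MeromorphicAt f₂ z := hm.mul hf
  have ho : meromorphicOrderAt f₂ z ≤ 0 := by
    have h1 : meromorphicOrderAt (fun w : ℂ => w - z) z = 1 := by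
      simp
    rw [meromorphicOrderAt_mul hm hf, h1]
    lift meromorphicOrderAt f z to ℤ using hneg.ne_top with n
    norm_cast at hneg ⊢
    omega
  have hlim : Tendsto (fun y => f₂ (r y)) (𝓝[>] 0) (𝓝 0) := by
    rw [Metric.tendsto_nhds]
    intro ε hε
    obtain ⟨A, hA⟩ := h (ε / 2) (by positivity)
    have hy : ∀ᶠ y : ℝ in 𝓝[>] 0, y * A < ε / 2 := by
      have : Tendsto (fun y : ℝ => y * A) (𝓝[>] 0) (𝓝 0) := by
        have : ContinuousAt (fun y : ℝ => y * A) 0 := by fun_prop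
        simpa using this.tendsto.mono_left nhdsWithin_le_nhds
      exact this.eventually_lt_const (by positivity)
    filter_upwards [hr.eventually hA, hy, self_mem_nhdsWithin] with y h1 h2 h3
    have h3 : 0 < y := h3
    have h4 := hsim y h3
    rw [← hrim] at h4
    have h5 := h1 (abs_pos.1 (h3.trans_le h4))
    have h6 : ε / 2 / |(r y).im| ≤ ε / 2 / y := by gcongr
    have h7 : y * ‖f (r y)‖ ≤ y * (A + ε / 2 / y) := by gcongr; linarith
    have h8 : y * (A + ε / 2 / y) = y * A + ε / 2 := by field_simp
    simp only [f₂, Pi.mul_apply, dist_zero_right, norm_mul, hrn, abs_of_pos h3]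
    linarith
  rcases ho.lt_or_eq with ho | ho
  · have := (tendsto_cobounded_of_meromorphicOrderAt_neg ho).comp hr
    exact hlim.not_tendsto (Metric.disjoint_nhds_cobounded 0) this
  · obtain ⟨c, hc, hlim'⟩ := tendsto_ne_zero_of_meromorphicOrderAt_eq_zero hf₂ ho
    exact hc (tendsto_nhds_unique (hlim'.comp hr) hlim)

theorem eq_zero_of_norm_div_le {P Q : ℂ → ℂ} (hP : Differentiable ℂ P) (hQ : Differentiable ℂ Q)
    (hP0 : ∀ z, ∀ᶠ w in 𝓝[≠] z, P w ≠ 0)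
    (hε : ∀ ε > 0, ∃ A : ℝ, ∀ z, z.im ≠ 0 → P z ≠ 0 → ‖Q z / P z‖ ≤ A + ε / |z.im|)
    {C : ℝ} (hC : ∀ z, z.im ≠ 0 → P z ≠ 0 → ‖Q z / P z‖ ≤ C / |z.im|)
    {z : ℂ} (hz : P z ≠ 0) : Q z = 0 := by
  have hm : MeromorphicOn (Q / P) univ := fun w _ =>
    (hQ.analyticAt w).meromorphicAt.div (hP.analyticAt w).meromorphicAt
  set F := toMeromorphicNFOn (Q / P) univ with hF
  have heq (w : ℂ) : F =ᶠ[𝓝[≠] w] Q / P := hm.toMeromorphicNFOn_eq_self_on_nhdsNE (mem_univ w)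
  have han (w : ℂ) : AnalyticAt ℂ F w := by
    rw [← (meromorphicNFOn_toMeromorphicNFOn (Q / P) univ
      (mem_univ w)).meromorphicOrderAt_nonneg_iff_analyticAt,
      meromorphicOrderAt_toMeromorphicNFOn hm (mem_univ w)]
    refine meromorphicOrderAt_nonneg_of_norm_le (hm w (mem_univ w)) fun ε h => ?_
    obtain ⟨A, hA⟩ := hε ε h
    exact ⟨A, (hP0 w).mono fun v hv him => hA v him hv⟩
  have hcont (w : ℂ) : ContinuousAt F w := (han w).continuousAt
  have hC0 : 0 ≤ |C| := abs_nonneg C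
  have hF0 : F = 0 := by
    refine eq_zero_of_norm_mul_abs_im_le (C := |C|) (fun w => (han w).differentiableAt) fun w => ?_
    have hc : ContinuousAt (fun v => ‖F v‖ * |v.im|) w :=
      (hcont w).norm.mul (continuous_abs.comp continuous_im).continuousAt
    refine le_of_tendsto (hc.tendsto.mono_left (nhdsWithin_le_nhds (s := {w}ᶜ))) ?_
    filter_upwards [heq w, hP0 w] with v h1 h2
    rw [h1]
    by_cases hv : v.im = 0
    · simp [hv]
    · have := hC v hv h2
      rw [le_div_iff₀ (abs_pos.2 hv)] at this
      exact this.trans (le_abs_self C)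
  have hcz : ContinuousAt (Q / P) z := hQ.continuous.continuousAt.div hP.continuous.continuousAt hz
  have := (((hcont z).eventuallyEq_nhds_iff_eventuallyEq_nhdsNE hcz).1 (heq z)).eq_of_nhds
  rw [hF0] at this
  simpa [hz] using this.symm

theorem norm_mul_cexp_I_mul (a z : ℂ) (x : ℝ) :
    ‖a * cexp (I * z * x)‖ = ‖a‖ * Real.exp (-z.im * x) := by
  simp [norm_exp]

theorem integrableOn_Ioi_mul_cexp {g : ℝ → ℂ} (hg : Continuous g) {C : ℝ} (hC : ∀ x, ‖g x‖ ≤ C)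
    {z : ℂ} (hz : 0 < z.im) (a : ℝ) :
    IntegrableOn (fun x : ℝ => g x * cexp (I * z * x)) (Ioi a) :=
  (integrableOn_exp_mul_complex_Ioi (a := I * z) (by simpa) a).bdd_mul
    hg.aestronglyMeasurable (ae_of_all _ hC)

theorem norm_integral_Ioi_mul_cexp_le {g : ℝ → ℂ} {a ε : ℝ} (ha : 0 ≤ a) (hε : 0 ≤ ε)
    (hg : ∀ x > a, ‖g x‖ ≤ ε) {z : ℂ} (hz : 0 < z.im) :
    ‖∫ x in Ioi a, g x * cexp (I * z * x)‖ ≤ ε / z.im := by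
  have hz' : -z.im < 0 := by linarith
  calc ‖∫ x in Ioi a, g x * cexp (I * z * x)‖ ≤ ∫ x in Ioi a, ε * Real.exp (-z.im * x) := by
        refine norm_integral_le_of_norm_le ((integrableOn_exp_mul_Ioi hz' a).const_mul ε) ?_
        filter_upwards [ae_restrict_mem measurableSet_Ioi] with x hx
        rw [norm_mul_cexp_I_mul]
        gcongr
        exact hg x hx
    _ = ε / z.im * Real.exp (-z.im * a) := by
        rw [integral_const_mul, integral_exp_mul_Ioi hz']
        field_simp
    _ ≤ ε / z.im * 1 := by
        gcongr
        rw [Real.exp_le_one_iff]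
        nlinarith
    _ = ε / z.im := mul_one _

theorem exists_norm_integral_Ioi_mul_cexp_le {g : ℝ → ℂ} (hg : Continuous g) {C : ℝ}
    (hC : ∀ x, ‖g x‖ ≤ C) (h0 : Tendsto g atTop (𝓝 0)) {ε : ℝ} (hε : 0 < ε) :
    ∃ A : ℝ, ∀ z : ℂ, 0 < z.im →
      ‖∫ x in Ioi (0 : ℝ), g x * cexp (I * z * x)‖ ≤ A + ε / z.im := by
  obtain ⟨a, ha⟩ := eventually_atTop.1 (h0.norm.eventually_le_const (by simpa using hε))
  have hb : 0 ≤ max a 0 := le_max_right _ _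
  refine ⟨C * |max a 0 - 0|, fun z hz => ?_⟩
  rw [← intervalIntegral.integral_interval_add_Ioi (b := max a 0)
    (integrableOn_Ioi_mul_cexp hg hC hz _) (integrableOn_Ioi_mul_cexp hg hC hz _)]
  refine (norm_add_le _ _).trans (add_le_add ?_ ?_)
  · refine intervalIntegral.norm_integral_le_of_norm_le_const fun x hx => ?_
    rw [uIoc_of_le hb] at hx
    have h1 : Real.exp (-z.im * x) ≤ 1 := by
      rw [Real.exp_le_one_iff]
      nlinarith [hx.1]
    rw [norm_mul_cexp_I_mul]
    exact (mul_le_of_le_one_right (norm_nonneg _) h1).trans (hC x)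
  · exact norm_integral_Ioi_mul_cexp_le hb hε.le
      (fun x hx => ha x ((le_max_left _ _).trans hx.le)) hz

theorem integral_Ioi_comp_add_right (f : ℝ → ℂ) (a t : ℝ) :
    ∫ x in Ioi a, f (x + t) = ∫ x in Ioi (a + t), f x := by
  have := (measurePreserving_add_right volume t).setIntegral_preimage_emb
    (MeasurableEquiv.addRight t).measurableEmbedding f (Ioi (a + t))
  simpa using this

theorem sum_mul_integral_Ioi_mul_cexp {m : ℕ} {g : ℝ → ℂ} (hg : Continuous g) {C : ℝ}
    (hC : ∀ x, ‖g x‖ ≤ C) {t : Fin m → ℝ} {c : Fin m → ℂ}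
    (heq : ∀ x : ℝ, ∑ k, c k * g (x + t k) = 0) {z : ℂ} (hz : 0 < z.im) :
    (∑ k, c k * cexp (-(I * z * t k))) * ∫ x in Ioi (0 : ℝ), g x * cexp (I * z * x) =
      ∑ k, c k * cexp (-(I * z * t k)) * ∫ x in (0 : ℝ)..t k, g x * cexp (I * z * x) := by
  have hint := integrableOn_Ioi_mul_cexp hg hC hz
  have hshift (k : Fin m) (x : ℝ) : c k * g (x + t k) * cexp (I * z * x) =
      c k * cexp (-(I * z * t k)) * (g (x + t k) * cexp (I * z * (x + t k : ℝ))) := by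
    have : cexp (I * z * x) = cexp (-(I * z * t k)) * cexp (I * z * (x + t k : ℝ)) := by
      rw [← Complex.exp_add]
      congr 1
      push_cast
      ring
    rw [this]
    ring
  have hsum : ∑ k, c k * cexp (-(I * z * t k)) *
      ∫ x in Ioi (t k), g x * cexp (I * z * x) = 0 := by
    calc _ = ∑ k, ∫ x in Ioi (0 : ℝ), c k * g (x + t k) * cexp (I * z * x) := by
          refine Finset.sum_congr rfl fun k _ => ?_
          simp_rw [hshift]
          rw [integral_const_mul,
            integral_Ioi_comp_add_right (fun x : ℝ => g x * cexp (I * z * x)), zero_add]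
      _ = ∫ x in Ioi (0 : ℝ), ∑ k, c k * g (x + t k) * cexp (I * z * x) := by
          refine (integral_finsetSum _ fun k _ => ?_).symm
          simp only [mul_assoc (c k)]
          exact (integrableOn_Ioi_mul_cexp (g := fun x => g (x + t k)) (by fun_prop)
            (fun x => hC _) hz 0).const_mul _
      _ = 0 := by simp_rw [← Finset.sum_mul, heq]; simp
  rw [← sub_zero (_ * _), ← hsum, Finset.sum_mul, ← Finset.sum_sub_distrib]
  refine Finset.sum_congr rfl fun k _ => ?_
  rw [← mul_sub, intervalIntegral.integral_Ioi_sub_Ioi' (hint _) (hint _)]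

theorem differentiable_intervalIntegral_mul_cexp {g : ℝ → ℂ} (hg : Continuous g) (a b : ℝ) :
    Differentiable ℂ fun z : ℂ => ∫ x in a..b, g x * cexp (I * z * x) := by
  intro z
  refine (intervalIntegral.hasDerivAt_integral_of_dominated_loc_of_deriv_le
    (F' := fun w x => g x * (cexp (I * w * x) * (I * x)))
    (bound := fun x => ‖g x‖ * (Real.exp ((‖z‖ + 1) * |x|) * |x|))
    (Metric.ball_mem_nhds z one_pos) ?_ ?_ ?_ ?_ ?_ ?_).2.differentiableAt
  · exact Eventually.of_forall fun w => Continuous.aestronglyMeasurable (by fun_prop)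
  · exact Continuous.intervalIntegrable (by fun_prop) _ _
  · exact Continuous.aestronglyMeasurable (by fun_prop)
  · refine ae_of_all _ fun x _ w hw => ?_
    have hw' : ‖w‖ ≤ ‖z‖ + 1 := by
      have := norm_le_norm_add_norm_sub' w z
      have := mem_ball_iff_norm.1 hw
      linarith
    have h1 : ‖cexp (I * w * x)‖ ≤ Real.exp ((‖z‖ + 1) * |x|) := by
      refine (norm_exp_le_exp_norm _).trans (Real.exp_le_exp.2 ?_)
      simp only [norm_mul, norm_I, one_mul, norm_real, Real.norm_eq_abs]
      gcongr
    simp only [norm_mul, norm_I, one_mul, norm_real, Real.norm_eq_abs]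
    gcongr
  · exact Continuous.intervalIntegrable (by fun_prop) _ _
  · refine ae_of_all _ fun x _ w _ => ?_
    have h : HasDerivAt (fun w : ℂ => I * w * x) (I * x) w := by
      simpa using ((hasDerivAt_id w).const_mul I).mul_const (x : ℂ)
    exact h.cexp.const_mul _

theorem eventually_sum_mul_cexp_ne_zero {m : ℕ} {t : Fin m → ℝ} (ht : Function.Injective t)
    {c : Fin m → ℂ} (hc : c ≠ 0) (z : ℂ) :
    ∀ᶠ w in 𝓝[≠] z, ∑ k, c k * cexp (-(I * w * t k)) ≠ 0 := by
  have hd : Differentiable ℂ fun w : ℂ => ∑ k, c k * cexp (-(I * w * t k)) := by fun_prop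
  by_contra hev
  have hfreq : ∃ᶠ w in 𝓝[≠] z, ∑ k, c k * cexp (-(I * w * t k)) = 0 :=
    (not_eventually.1 hev).mono fun _ => not_not.1
  have hzero := (show AnalyticOnNhd ℂ _ univ from fun w _ =>
    hd.analyticAt w).eqOn_zero_of_preconnected_of_frequently_eq_zero isPreconnected_univ
      (mem_univ z) hfreq
  let χ : Fin m → Multiplicative ℂ →* ℂ := fun k =>
    { toFun := fun w => cexp (-(I * w.toAdd * t k))
      map_one' := by simp
      map_mul' := fun v w => by
        rw [← Complex.exp_add, toAdd_mul]
        congr 1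
        ring }
  have hχ : Function.Injective χ := by
    intro j k hjk
    have h := DFunLike.congr_fun hjk (Multiplicative.ofAdd I)
    have h' : cexp (t j) = cexp (t k) := by
      simpa [χ, ← mul_assoc] using h
    rw [← ofReal_exp, ← ofReal_exp, ofReal_inj, Real.exp_eq_exp] at h'
    exact ht h'
  have hlin := (linearIndependent_monoidHom (Multiplicative ℂ) ℂ).comp χ hχ
  refine hc (funext (Fintype.linearIndependent_iff.1 hlin c ?_))
  ext w
  simpa [χ] using hzero (mem_univ w.toAdd)

theorem eq_zero_of_integral_Ioi_mul_cexp_eq_zero {g : ℝ → ℂ} (hg : Continuous g) {C : ℝ}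
    (hC : ∀ x, ‖g x‖ ≤ C)
    (h : ∀ v : ℝ, ∀ᶠ w : ℝ in 𝓝[≠] v,
      ∫ x in Ioi (0 : ℝ), g x * cexp (I * (w + I) * x) = 0 ∧
      ∫ x in Ioi (0 : ℝ), g (-x) * cexp (I * (-w + I) * x) = 0) :
    g = 0 := by
  let f : ℝ → ℂ := fun x => g x * Real.exp (-|x|)
  have hf : Continuous f := by fun_prop
  have hi₁ : IntegrableOn f (Ioi 0) := by
    refine (integrableOn_Ioi_mul_cexp hg hC (z := I) (by simp) 0).congr_fun (fun x hx => ?_)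
      measurableSet_Ioi
    simp [f, abs_of_pos (mem_Ioi.1 hx)]
  have hi₂ : IntegrableOn f (Iic 0) := by
    have hg' : Continuous fun x => g (-x) := by fun_prop
    have := (integrableOn_Ioi_mul_cexp hg' (fun x => hC _) (z := I) (by simp) 0)
    rw [← neg_zero] at this
    rw [integrableOn_Iic_iff_integrableOn_Iio]
    refine this.comp_neg_Iio.congr_fun (fun x hx => ?_) measurableSet_Iio
    simp [f, abs_of_neg (mem_Iio.1 hx)]
  have hi : Integrable f := by
    rw [← integrableOn_univ, ← Iic_union_Ioi (a := (0 : ℝ))]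
    exact hi₂.union hi₁
  have hF (w : ℝ) : FourierTransform.fourier f w =
      (∫ x in Ioi (0 : ℝ), g (-x) * cexp (I * (-(-2 * Real.pi * w : ℝ) + I) * x)) +
      ∫ x in Ioi (0 : ℝ), g x * cexp (I * ((-2 * Real.pi * w : ℝ) + I) * x) := by
    have hint : Integrable fun v : ℝ => cexp ((-2 * Real.pi * v * w : ℝ) * I) • f v := by
      refine hi.bdd_mul (c := 1) (Continuous.aestronglyMeasurable (by fun_prop))
        (ae_of_all _ fun v => ?_)
      rw [norm_exp_ofReal_mul_I]
    rw [Real.fourier_real_eq_integral_exp_smul,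
      ← intervalIntegral.integral_Iic_add_Ioi (b := 0) hint.integrableOn hint.integrableOn]
    congr 1
    · rw [← neg_zero, ← integral_comp_neg_Ioi, neg_zero]
      refine setIntegral_congr_fun measurableSet_Ioi fun x hx => ?_
      simp only [f, abs_neg, abs_of_pos (mem_Ioi.1 hx), smul_eq_mul, ofReal_exp]
      rw [mul_left_comm, ← Complex.exp_add]
      congr 2
      push_cast
      linear_combination (-(x : ℂ)) * I_mul_I
    · refine setIntegral_congr_fun measurableSet_Ioi fun x hx => ?_
      simp only [f, abs_of_pos (mem_Ioi.1 hx), smul_eq_mul, ofReal_exp]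
      rw [mul_left_comm, ← Complex.exp_add]
      congr 2
      push_cast
      linear_combination (-(x : ℂ)) * I_mul_I
  have hFc : Continuous (FourierTransform.fourier f) :=
    VectorFourier.fourierIntegral_continuous Real.continuous_fourierChar
      (by exact continuous_inner) hi
  have hF0 : FourierTransform.fourier f = 0 := by
    funext v
    have hv : Tendsto (fun w : ℝ => -2 * Real.pi * w) (𝓝[≠] v) (𝓝[≠] (-2 * Real.pi * v)) := by
      refine tendsto_nhdsWithin_iff.2 ⟨?_, ?_⟩
      · exact (Continuous.tendsto (by fun_prop) v).mono_left nhdsWithin_le_nhds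
      · filter_upwards [self_mem_nhdsWithin] with w hw hw'
        exact hw (mul_left_cancel₀ (by simp [Real.pi_ne_zero]) hw')
    have he : FourierTransform.fourier f =ᶠ[𝓝[≠] v] 0 := by
      filter_upwards [hv.eventually (h _)] with w hw
      rw [hF, hw.1, hw.2]
      simp
    exact ((hFc.continuousAt.eventuallyEq_nhds_iff_eventuallyEq_nhdsNE
      continuousAt_const).1 he).eq_of_nhds
  funext x
  have := hi.fourierInv_fourier_eq (by rw [hF0]; exact integrable_zero _ _ _)
    (hf.continuousAt (x := x))
  rw [hF0, Real.fourierInv_eq] at this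
  simpa [f] using this.symm

/-- a nonzero continuous function on `ℝ` vanishing at infinity
has linearly independent translates. -/
theorem linearIndependent_translates_of_C0
    {m : ℕ} (g : ℝ → ℂ) (hcont : Continuous g)
    (hzero : Tendsto g (cocompact ℝ) (nhds 0)) (hne : g ≠ 0)
    (t : Fin m → ℝ) (ht : Function.Injective t) (c : Fin m → ℂ)
    (heq : ∀ x : ℝ, ∑ k, c k * g (x + t k) = 0) :
    c = 0 := by
  by_contra hc
  obtain ⟨C, hC⟩ : ∃ C, ∀ x, ‖g x‖ ≤ C :=
    let φ : ZeroAtInftyContinuousMap ℝ ℂ := ⟨⟨g, hcont⟩, hzero⟩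
    ⟨‖φ.toBCF‖, fun x => φ.toBCF.norm_coe_le_norm x⟩
  have hC0 : 0 ≤ C := (norm_nonneg _).trans (hC 0)
  have hcont' : Continuous fun x => g (-x) := by fun_prop
  have hC' (x : ℝ) : ‖g (-x)‖ ≤ C := hC _
  rw [cocompact_eq_atBot_atTop, tendsto_sup] at hzero
  have hzero' : Tendsto (fun x => g (-x)) atTop (𝓝 0) := hzero.1.comp tendsto_neg_atTop_atBot
  have heq' (x : ℝ) : ∑ k, c k * g (-(x + -t k)) = 0 := by
    simpa [add_comm] using heq (-x)
  set P : ℂ → ℂ := fun z => ∑ k, c k * cexp (-(I * z * t k))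
  set Q : ℂ → ℂ := fun z =>
    ∑ k, c k * cexp (-(I * z * t k)) * ∫ x in (0 : ℝ)..t k, g x * cexp (I * z * x) with hQdef
  have hP : Differentiable ℂ P := by fun_prop
  have hQ : Differentiable ℂ Q := by
    have := fun k => differentiable_intervalIntegral_mul_cexp hcont 0 (t k)
    fun_prop
  have hpos {z : ℂ} (hz : 0 < z.im) :
      P z * ∫ x in Ioi (0 : ℝ), g x * cexp (I * z * x) = Q z :=
    sum_mul_integral_Ioi_mul_cexp hcont hC heq hz
  have hneg {z : ℂ} (hz : z.im < 0) :
      P z * ∫ x in Ioi (0 : ℝ), g (-x) * cexp (I * -z * x) = -Q z := by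
    have h := sum_mul_integral_Ioi_mul_cexp (z := -z) hcont' hC' heq' (by simpa)
    have hcexp (k : Fin m) : cexp (-(I * -z * (-t k : ℝ))) = cexp (-(I * z * t k)) := by
      simp
    have hint (k : Fin m) : ∫ x in (0 : ℝ)..-t k, g (-x) * cexp (I * -z * x) =
        -∫ x in (0 : ℝ)..t k, g x * cexp (I * z * x) := by
      have := intervalIntegral.integral_comp_neg (a := 0) (b := -t k)
        (fun x : ℝ => g x * cexp (I * z * x))
      rw [neg_neg, neg_zero, intervalIntegral.integral_symm 0 (t k)] at this
      rw [← this]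
      simp
    simp only [hcexp, hint] at h
    refine h.trans ?_
    simp only [hQdef, mul_neg, Finset.sum_neg_distrib]
  have hle {z : ℂ} (hz : z.im ≠ 0) (hPz : P z ≠ 0) {B : ℝ}
      (h₁ : 0 < z.im → ‖∫ x in Ioi (0 : ℝ), g x * cexp (I * z * x)‖ ≤ B)
      (h₂ : z.im < 0 → ‖∫ x in Ioi (0 : ℝ), g (-x) * cexp (I * -z * x)‖ ≤ B) :
      ‖Q z / P z‖ ≤ B := by
    rcases hz.lt_or_gt with hz | hz
    · rw [← norm_neg, ← neg_div, ← hneg hz, mul_div_cancel_left₀ _ hPz]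
      exact h₂ hz
    · rw [← hpos hz, mul_div_cancel_left₀ _ hPz]
      exact h₁ hz
  have hPne := eventually_sum_mul_cexp_ne_zero ht hc
  have hQ0 {z : ℂ} (hz : P z ≠ 0) : Q z = 0 := by
    refine eq_zero_of_norm_div_le hP hQ hPne (fun ε hε => ?_) (C := C)
      (fun z hz hPz => hle hz hPz (fun h => ?_) fun h => ?_) hz
    · obtain ⟨A₁, hA₁⟩ := exists_norm_integral_Ioi_mul_cexp_le hcont hC hzero.2 hε
      obtain ⟨A₂, hA₂⟩ := exists_norm_integral_Ioi_mul_cexp_le hcont' hC' hzero' hε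
      refine ⟨max A₁ A₂, fun z hz hPz => hle hz hPz (fun h => ?_) fun h => ?_⟩
      · rw [abs_of_pos h]
        exact (hA₁ z h).trans (by gcongr; exact le_max_left _ _)
      · rw [abs_of_neg h]
        exact (hA₂ (-z) (by simpa)).trans (by rw [neg_im]; gcongr; exact le_max_right _ _)
    · rw [abs_of_pos h]
      exact norm_integral_Ioi_mul_cexp_le le_rfl hC0 (fun x _ => hC x) h
    · rw [abs_of_neg h, ← neg_im]
      exact norm_integral_Ioi_mul_cexp_le le_rfl hC0 (fun x _ => hC' x) (by simpa)
  have hline (b : ℂ) (v : ℝ) : ∀ᶠ w : ℝ in 𝓝[≠] v, P (w + b) ≠ 0 := by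
    refine Tendsto.eventually (f := fun w : ℝ => (w + b : ℂ)) (tendsto_nhdsWithin_iff.2 ⟨?_, ?_⟩)
      (hPne (v + b))
    · exact (Continuous.tendsto (by fun_prop) v).mono_left nhdsWithin_le_nhds
    · filter_upwards [self_mem_nhdsWithin] with w hw hw'
      exact hw (by simpa using hw')
  refine hne (eq_zero_of_integral_Ioi_mul_cexp_eq_zero hcont hC fun v => ?_)
  filter_upwards [hline I v, hline (-I) v] with w h₁ h₂
  constructor
  · have := hpos (z := w + I) (by simp)
    rw [hQ0 h₁] at this
    exact (mul_eq_zero.1 this).resolve_left h₁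
  · have := hneg (z := w + -I) (by simp)
    rw [hQ0 h₂, neg_zero] at this
    simpa only [neg_add, neg_neg] using (mul_eq_zero.1 this).resolve_left h₂
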